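/- arXiv:1606.08974 — 3 statements merged into one kernel-verified Lean document; each statement's English description precedes it below -/
import Mathlib

section
/- Let n ≥ 2, let α ∈ (0,1), and let c_α ∈ ℝ be such that the probability that τ_n ≤ c_α equals α when X_1,…,X_n are i.i.d. Uniform[0,1]. Then for every measurable test φ : ℝ^n → {0,1} that is scale-free (i.e. φ(t·x) = φ(x) for all t > 0 and all x ∈ (0,∞)^n) and has level at most α under the uniform model (i.e. E[φ(X)] ≤ α when X_1,…,X_n are i.i.d. Uniform[0,1]), the power of φ under the exponential model is at most that of the test 1{τ_n ≤ c_α}: E[φ(X)] ≤ P(τ_n ≤ c_α) when X_1,…,X_n are i.i.d. Exponential(1). -/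
open MeasureTheory ProbabilityTheory

/-- The uniform probability measure on `[0, θ]`. -/
noncomputable def uniformMeasure (θ : ℝ) : Measure ℝ :=
  ENNReal.ofReal θ⁻¹ • volume.restrict (Set.Icc 0 θ)

/-- The joint law of an i.i.d. sample of size `n` from `Uniform[0, θ]`. -/
noncomputable def iidUniform (n : ℕ) (θ : ℝ) : Measure (Fin n → ℝ) :=
  Measure.pi fun _ => uniformMeasure θ

/-- The joint law of an i.i.d. sample of size `n` from `Exponential(r)`. -/
noncomputable def iidExp (n : ℕ) (r : ℝ) : Measure (Fin n → ℝ) :=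
  Measure.pi fun _ => expMeasure r

/-- Sample maximum `x_(n)`. -/
noncomputable def sampleMax {n : ℕ} (x : Fin n → ℝ) : ℝ := ⨆ i, x i

/-- Empirical mean. -/
noncomputable def sampleMean {n : ℕ} (x : Fin n → ℝ) : ℝ := (∑ i, x i) / n

/-- The mean/max statistic `τ_n`. -/
noncomputable def tau {n : ℕ} (x : Fin n → ℝ) : ℝ := sampleMean x / sampleMax x

/-!
Scale-free functions only see the ray through the sample. Writing points of a ray as `exp u • x`,
the likelihood ratio of two laws with densities `p` and `q`, seen on rays, is the ratio of the
integrals of `exp (n * u) * p (exp u • x)` and `exp (n * u) * q (exp u • x)` over `u : ℝ`. For the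
uniform law this integral is `1 / (n * (max x) ^ n)`, for the exponential law it is
`(n - 1)! / (∑ i, x i) ^ n`, so the ratio is `n ! / (n * τ) ^ n`, which decreases in `τ`, and the
Neyman-Pearson lemma applies.
-/

open Set Module
open scoped ENNReal

section ProductDensity

theorem lintegral_pi_prod_fin {n : ℕ} {X : Fin n → Type*} [∀ i, MeasurableSpace (X i)]
    (μ : ∀ i, Measure (X i)) [∀ i, SigmaFinite (μ i)] {f : ∀ i, X i → ℝ≥0∞}
    (hf : ∀ i, Measurable (f i)) :
    ∫⁻ x, ∏ i, f i (x i) ∂Measure.pi μ = ∏ i, ∫⁻ x, f i x ∂μ i := by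
  induction n with
  | zero => simp
  | succ n ih =>
    calc
      _ = ∫⁻ x, f 0 (x 0) * ∏ i : Fin n, f i.succ (x i.succ) ∂Measure.pi μ := by
        simp_rw [Fin.prod_univ_succ]
      _ = ∫⁻ x : X 0 × ∀ i : Fin n, X i.succ, f 0 x.1 * ∏ i : Fin n, f i.succ (x.2 i)
          ∂(μ 0).prod (Measure.pi fun i : Fin n ↦ μ i.succ) :=
        ((measurePreserving_piFinSuccAbove μ 0).lintegral_map_equiv
          (fun x ↦ f 0 x.1 * ∏ i : Fin n, f i.succ (x.2 i)) _).symm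
      _ = (∫⁻ x, f 0 x ∂μ 0) * ∏ i : Fin n, ∫⁻ x, f i.succ x ∂μ i.succ := by
        rw [← ih _ fun i ↦ hf i.succ]
        exact lintegral_prod_mul (hf 0).aemeasurable
          (Finset.measurable_fun_prod _ fun (i : Fin n) _ ↦
            (hf i.succ).comp (measurable_pi_apply i)).aemeasurable
      _ = ∏ i, ∫⁻ x, f i x ∂μ i := (Fin.prod_univ_succ fun i ↦ ∫⁻ x, f i x ∂μ i).symm

variable {ι : Type*} [Fintype ι] {X : ι → Type*} [∀ i, MeasurableSpace (X i)]
  (μ : ∀ i, Measure (X i)) [∀ i, SigmaFinite (μ i)]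

theorem lintegral_pi_prod {f : ∀ i, X i → ℝ≥0∞} (hf : ∀ i, Measurable (f i)) :
    ∫⁻ x, ∏ i, f i (x i) ∂Measure.pi μ = ∏ i, ∫⁻ x, f i x ∂μ i := by
  let e := (Fintype.equivFin ι).symm
  rw [← (measurePreserving_piCongrLeft μ e).lintegral_comp_emb
    (MeasurableEquiv.measurableEmbedding _)]
  simp_rw [← e.prod_comp, MeasurableEquiv.coe_piCongrLeft, Equiv.piCongrLeft_apply_apply]
  exact lintegral_pi_prod_fin _ fun i ↦ hf (e i)

theorem pi_withDensity {f : ∀ i, X i → ℝ≥0∞} (hf : ∀ i, Measurable (f i))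
    [∀ i, SigmaFinite ((μ i).withDensity (f i))] :
    Measure.pi (fun i ↦ (μ i).withDensity (f i)) =
      (Measure.pi μ).withDensity fun x ↦ ∏ i, f i (x i) := by
  refine Measure.pi_eq fun s hs ↦ ?_
  rw [withDensity_apply _ (MeasurableSet.univ_pi hs), Measure.restrict_pi_pi,
    lintegral_pi_prod _ hf]
  simp_rw [withDensity_apply _ (hs _)]

theorem pi_withDensity_indicator {s : ∀ i, Set (X i)} (hs : ∀ i, MeasurableSet (s i))
    {f : ∀ i, X i → ℝ≥0∞} (hf : ∀ i, Measurable (f i)) (hf_top : ∀ i x, f i x ≠ ⊤) :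
    Measure.pi (fun i ↦ (μ i).withDensity ((s i).indicator (f i))) =
      (Measure.pi μ).withDensity ((univ.pi s).indicator fun x ↦ ∏ i, f i (x i)) := by
  have (i : ι) : SigmaFinite (((μ i).restrict (s i)).withDensity (f i)) :=
    .withDensity_of_ne_top' (hf_top i)
  simp_rw [withDensity_indicator (hs _), withDensity_indicator (MeasurableSet.univ_pi hs),
    pi_withDensity _ hf, Measure.restrict_pi_pi]

end ProductDensity

section Integrals

theorem lintegral_Ioi_zero_eq_lintegral_comp_exp (g : ℝ → ℝ≥0∞) :
    ∫⁻ t in Ioi 0, g t = ∫⁻ u, ENNReal.ofReal (Real.exp u) * g (Real.exp u) := by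
  have := lintegral_image_eq_lintegral_abs_deriv_mul MeasurableSet.univ
    (fun u _ ↦ (Real.hasDerivAt_exp u).hasDerivWithinAt) Real.exp_injective.injOn g
  simpa [Real.range_exp, abs_of_pos (Real.exp_pos _)] using this

theorem lintegral_Ioi_rpow_mul_exp_neg_mul {a r : ℝ} (ha : 0 < a) (hr : 0 < r) :
    ∫⁻ t in Ioi (0 : ℝ), ENNReal.ofReal (t ^ (a - 1) * Real.exp (-(r * t))) =
      ENNReal.ofReal ((1 / r) ^ a * Real.Gamma a) := by
  have hΓ := Real.integral_rpow_mul_exp_neg_mul_Ioi ha hr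
  rw [← hΓ, ofReal_integral_eq_lintegral_ofReal]
  · refine .of_integral_ne_zero ?_
    have := Real.Gamma_pos_of_pos ha
    rw [hΓ]
    positivity
  · filter_upwards [ae_restrict_mem measurableSet_Ioi] with t (ht : 0 < t)
    positivity

theorem lintegral_exp_mul_mul_exp_neg_mul_exp {a r : ℝ} (ha : 0 < a) (hr : 0 < r) :
    ∫⁻ u, ENNReal.ofReal (Real.exp (a * u)) * ENNReal.ofReal (Real.exp (-(r * Real.exp u))) =
      ENNReal.ofReal ((1 / r) ^ a * Real.Gamma a) := by
  rw [← lintegral_Ioi_rpow_mul_exp_neg_mul ha hr, lintegral_Ioi_zero_eq_lintegral_comp_exp]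
  refine lintegral_congr fun u ↦ ?_
  rw [← ENNReal.ofReal_mul (Real.exp_nonneg _), ← ENNReal.ofReal_mul (Real.exp_nonneg _),
    ← mul_assoc, ← Real.exp_mul, ← Real.exp_add u]
  congr 3
  ring

theorem lintegral_Iio_exp_mul {a : ℝ} (ha : 0 < a) (b : ℝ) :
    ∫⁻ u in Iio b, ENNReal.ofReal (Real.exp (a * u)) =
      ENNReal.ofReal (Real.exp (a * b) / a) := by
  rw [setLIntegral_congr Iio_ae_eq_Iic, ← integral_exp_mul_Iic ha,
    ofReal_integral_eq_lintegral_ofReal (integrableOn_exp_mul_Iic ha b)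
      (ae_of_all _ fun u ↦ Real.exp_nonneg _)]

end Integrals

section OrbitIntegral

variable {E : Type*} [NormedAddCommGroup E] [NormedSpace ℝ E]

/-- The integral `∫₀^∞ t ^ d * p (t • x) dt / t` of `p` along the ray through `x`, where `d` is the
dimension of `E`, in the parametrization `t = exp u`. If `p` is the density of a random vector, its
orbit integral gives, up to a factor independent of `p`, the density of the direction of that
vector. -/
noncomputable def orbitIntegral (p : E → ℝ≥0∞) (x : E) : ℝ≥0∞ :=
  ∫⁻ u : ℝ, ENNReal.ofReal (Real.exp (finrank ℝ E * u)) * p (Real.exp u • x)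

theorem orbitIntegral_exp_smul (p : E → ℝ≥0∞) (v : ℝ) (x : E) :
    orbitIntegral p (Real.exp v • x) =
      ENNReal.ofReal (Real.exp (-(finrank ℝ E * v))) * orbitIntegral p x := by
  rw [orbitIntegral, orbitIntegral, ← lintegral_const_mul' _ _ ENNReal.ofReal_ne_top,
    ← lintegral_add_right_eq_self _ (-v)]
  refine lintegral_congr fun u ↦ ?_
  rw [smul_smul, ← Real.exp_add, neg_add_cancel_right, ← mul_assoc,
    ← ENNReal.ofReal_mul (Real.exp_nonneg _), ← Real.exp_add]
  ring_nf

variable [MeasurableSpace E] [BorelSpace E] [FiniteDimensional ℝ E]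

@[fun_prop]
theorem measurable_orbitIntegral {p : E → ℝ≥0∞} (hp : Measurable p) :
    Measurable (orbitIntegral p) := by
  unfold orbitIntegral
  fun_prop

variable (μ : Measure E) [μ.IsAddHaarMeasure]

theorem lintegral_eq_exp_mul_lintegral_exp_smul (u : ℝ) {f : E → ℝ≥0∞} (hf : Measurable f) :
    ∫⁻ x, f x ∂μ =
      ENNReal.ofReal (Real.exp (finrank ℝ E * u)) * ∫⁻ x, f (Real.exp u • x) ∂μ := by
  rw [← lintegral_map hf (measurable_const_smul _), Measure.map_addHaar_smul _ (Real.exp_ne_zero u),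
    lintegral_smul_measure, smul_eq_mul, ← mul_assoc, ← ENNReal.ofReal_mul (Real.exp_nonneg _),
    ← Real.exp_nat_mul, abs_of_pos (by positivity), mul_inv_cancel₀ (Real.exp_ne_zero _),
    ENNReal.ofReal_one, one_mul]

theorem lintegral_mul_orbitIntegral_comm {g p q : E → ℝ≥0∞}
    (hg : Measurable g) (hp : Measurable p) (hq : Measurable q)
    (hg_smul : ∀ x ∈ Function.support p, ∀ u : ℝ,
      g (Real.exp u • x) = ENNReal.ofReal (Real.exp (finrank ℝ E * u)) * g x) :
    ∫⁻ x, q x * g x * orbitIntegral p x ∂μ = ∫⁻ x, p x * g x * orbitIntegral q x ∂μ := by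
  set w : ℝ → ℝ≥0∞ := fun u ↦ ENNReal.ofReal (Real.exp (finrank ℝ E * u)) with hw
  have hw_meas : Measurable w := by fun_prop
  have hw_neg (u : ℝ) : w (-u) * w u = 1 := by
    simp [hw, ← ENNReal.ofReal_mul (Real.exp_nonneg _), ← Real.exp_add]
  have hscale (u : ℝ) :
      ∫⁻ x, q x * g x * (w u * p (Real.exp u • x)) ∂μ =
        ∫⁻ x, p x * g x * (w (-u) * q (Real.exp (-u) • x)) ∂μ := by
    rw [lintegral_eq_exp_mul_lintegral_exp_smul μ (-u) (by fun_prop),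
      ← lintegral_const_mul _ (by fun_prop)]
    refine lintegral_congr fun x ↦ ?_
    rw [smul_smul, ← Real.exp_add, add_neg_cancel, Real.exp_zero, one_smul]
    obtain hx | hx := eq_or_ne (p x) 0
    · simp [hx]
    · calc
        _ = w (-u) * w u * (p x * g x * (w (-u) * q (Real.exp (-u) • x))) := by
          rw [hg_smul x hx]
          ring
        _ = _ := by rw [hw_neg, one_mul]
  calc
    _ = ∫⁻ x, (∫⁻ u, q x * g x * (w u * p (Real.exp u • x))) ∂μ :=
      lintegral_congr fun x ↦ (lintegral_const_mul _ (by fun_prop)).symm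
    _ = ∫⁻ u, (∫⁻ x, q x * g x * (w u * p (Real.exp u • x)) ∂μ) :=
      lintegral_lintegral_swap (by fun_prop)
    _ = ∫⁻ u, (∫⁻ x, p x * g x * (w (-u) * q (Real.exp (-u) • x)) ∂μ) :=
      lintegral_congr hscale
    _ = ∫⁻ x, (∫⁻ u, p x * g x * (w (-u) * q (Real.exp (-u) • x))) ∂μ :=
      lintegral_lintegral_swap (by fun_prop)
    _ = ∫⁻ x, p x * g x * orbitIntegral q x ∂μ := by
      refine lintegral_congr fun x ↦ ?_
      rw [lintegral_const_mul _ (by fun_prop),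
        lintegral_neg_eq_self fun u ↦ w u * q (Real.exp u • x), orbitIntegral]

/-- Wijsman's representation of the likelihood ratio of the maximal invariant, for the group of
dilations. -/
theorem lintegral_withDensity_eq_lintegral_mul_orbitIntegral_div {f p q : E → ℝ≥0∞}
    (hf : Measurable f) (hp : Measurable p) (hq : Measurable q)
    (hf_smul : ∀ x ∈ Function.support p, ∀ t : ℝ, 0 < t → f (t • x) = f x)
    (hq_zero : ∀ x ∈ Function.support p, orbitIntegral q x ≠ 0)
    (hq_top : ∀ x ∈ Function.support p, orbitIntegral q x ≠ ⊤) :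
    ∫⁻ x, f x ∂μ.withDensity p =
      ∫⁻ x, f x * (orbitIntegral p x / orbitIntegral q x) ∂μ.withDensity q := by
  rw [lintegral_withDensity_eq_lintegral_mul _ hp hf,
    lintegral_withDensity_eq_lintegral_mul _ hq (by fun_prop)]
  calc
    _ = ∫⁻ x, p x * (f x / orbitIntegral q x) * orbitIntegral q x ∂μ := by
      refine lintegral_congr fun x ↦ ?_
      obtain hx | hx := eq_or_ne (p x) 0
      · simp [hx]
      · rw [mul_assoc, ENNReal.div_mul_cancel (hq_zero x hx) (hq_top x hx), Pi.mul_apply]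
    _ = ∫⁻ x, q x * (f x / orbitIntegral q x) * orbitIntegral p x ∂μ := by
      refine (lintegral_mul_orbitIntegral_comm μ (by fun_prop) hp hq fun x hx u ↦ ?_).symm
      rw [hf_smul x hx _ (Real.exp_pos u), orbitIntegral_exp_smul, Real.exp_neg,
        ENNReal.ofReal_inv_of_pos (Real.exp_pos _), div_eq_mul_inv,
        ENNReal.mul_inv (.inl (ENNReal.inv_ne_zero.2 ENNReal.ofReal_ne_top))
          (.inl (ENNReal.inv_ne_top.2 (by positivity))), inv_inv, div_eq_mul_inv]
      ring
    _ = _ := by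
      refine lintegral_congr fun x ↦ ?_
      simp only [Pi.mul_apply, div_eq_mul_inv]
      ring

end OrbitIntegral

section Statistics

variable {n : ℕ}

theorem measurable_sampleMax : Measurable (sampleMax (n := n)) :=
  .iSup fun i ↦ measurable_pi_apply i

theorem sampleMax_smul {t : ℝ} (ht : 0 ≤ t) (x : Fin n → ℝ) :
    sampleMax (t • x) = t * sampleMax x := by
  simp [sampleMax, Real.mul_iSup_of_nonneg ht]

@[fun_prop]
theorem measurable_tau : Measurable (tau (n := n)) := by
  have := measurable_sampleMax (n := n)
  unfold tau sampleMean
  fun_prop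

theorem tau_smul {t : ℝ} (ht : 0 < t) (x : Fin n → ℝ) : tau (t • x) = tau x := by
  simp only [tau, sampleMean, sampleMax_smul ht.le, Pi.smul_apply, smul_eq_mul, ← Finset.mul_sum]
  rw [mul_div_assoc, mul_div_mul_left _ _ ht.ne']

variable [NeZero n] {x : Fin n → ℝ}

theorem sampleMax_lt_iff {t : ℝ} : sampleMax x < t ↔ ∀ i, x i < t := by
  refine ⟨fun h i ↦ (le_ciSup (finite_range x).bddAbove i).trans_lt h, fun h ↦ ?_⟩
  obtain ⟨i, hi⟩ := exists_eq_ciSup_of_finite (f := x)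
  exact hi.symm.trans_lt (h i)

theorem sampleMax_pos (hx : ∀ i, 0 < x i) : 0 < sampleMax x :=
  (hx 0).trans_le (le_ciSup (finite_range x).bddAbove 0)

theorem sum_pos_of_forall_pos (hx : ∀ i, 0 < x i) : 0 < ∑ i, x i :=
  Finset.sum_pos (fun i _ ↦ hx i) Finset.univ_nonempty

theorem tau_pos (hx : ∀ i, 0 < x i) : 0 < tau x :=
  div_pos (div_pos (sum_pos_of_forall_pos hx) (Nat.cast_pos.2 (NeZero.pos n))) (sampleMax_pos hx)

end Statistics

section Densities

/-- The density of `iidUniform n θ`; the open cube replaces the closed one so that its support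
consists of samples with positive entries. -/
noncomputable def iidUniformPDF (n : ℕ) (θ : ℝ) : (Fin n → ℝ) → ℝ≥0∞ :=
  (univ.pi fun _ ↦ Ioo 0 θ).indicator fun _ ↦ ENNReal.ofReal θ⁻¹ ^ n

/-- The density of `iidExp n r`, set to `0` on the boundary of the positive orthant so that its
support consists of samples with positive entries. -/
noncomputable def iidExpPDF (n : ℕ) (r : ℝ) : (Fin n → ℝ) → ℝ≥0∞ :=
  (univ.pi fun _ ↦ Ioi 0).indicator fun x ↦
    ENNReal.ofReal r ^ n * ENNReal.ofReal (Real.exp (-(r * ∑ i, x i)))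

variable {n : ℕ} {θ r : ℝ} {x : Fin n → ℝ}

@[fun_prop]
theorem measurable_iidUniformPDF : Measurable (iidUniformPDF n θ) :=
  measurable_const.indicator (MeasurableSet.univ_pi fun _ ↦ measurableSet_Ioo)

@[fun_prop]
theorem measurable_iidExpPDF : Measurable (iidExpPDF n r) :=
  Measurable.indicator (by fun_prop) (MeasurableSet.univ_pi fun _ ↦ measurableSet_Ioi)

theorem pos_of_mem_support_iidExpPDF (hx : x ∈ Function.support (iidExpPDF n r)) (i : Fin n) :
    0 < x i :=
  mem_of_indicator_ne_zero hx i trivial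

theorem iidUniform_eq_withDensity : iidUniform n θ = volume.withDensity (iidUniformPDF n θ) := by
  have hθ : uniformMeasure θ =
      volume.withDensity ((Ioo 0 θ).indicator fun _ ↦ ENNReal.ofReal θ⁻¹) := by
    rw [withDensity_indicator measurableSet_Ioo, withDensity_const, uniformMeasure,
      Measure.restrict_congr_set Ioo_ae_eq_Icc]
  rw [iidUniform, hθ, pi_withDensity_indicator _ (fun _ ↦ measurableSet_Ioo)
    (fun _ ↦ measurable_const) (fun _ _ ↦ ENNReal.ofReal_ne_top)]
  simp [iidUniformPDF, volume_pi]

theorem iidExp_eq_withDensity (hr : 0 ≤ r) :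
    iidExp n r = volume.withDensity (iidExpPDF n r) := by
  have hexp : expMeasure r = volume.withDensity
      ((Ioi 0).indicator fun x ↦ ENNReal.ofReal (r * Real.exp (-(r * x)))) := by
    rw [withDensity_indicator measurableSet_Ioi, Measure.restrict_congr_set Ioi_ae_eq_Ici,
      ← withDensity_indicator measurableSet_Ici, expMeasure, gammaMeasure]
    congr 1
    ext x
    by_cases hx : 0 ≤ x <;> simp [gammaPDF, gammaPDFReal, hx]
  rw [iidExp, hexp, pi_withDensity_indicator _ (fun _ ↦ measurableSet_Ioi) (fun _ ↦ by fun_prop)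
    (fun _ _ ↦ ENNReal.ofReal_ne_top)]
  simp_rw [ENNReal.ofReal_mul hr, Finset.prod_mul_distrib,
    ← ENNReal.ofReal_prod_of_nonneg fun _ _ ↦ Real.exp_nonneg _, ← Real.exp_sum]
  simp [iidExpPDF, volume_pi, Finset.mul_sum]

theorem ae_iidUniform_pos : ∀ᵐ x ∂iidUniform n θ, ∀ i, 0 < x i := by
  rw [iidUniform_eq_withDensity, ae_withDensity_iff measurable_iidUniformPDF]
  exact ae_of_all _ fun x hx i ↦ (mem_of_indicator_ne_zero hx i trivial).1

theorem isProbabilityMeasure_iidUniform (hθ : 0 < θ) : IsProbabilityMeasure (iidUniform n θ) := by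
  have : IsProbabilityMeasure (uniformMeasure θ) :=
    ⟨by simp [uniformMeasure, ← ENNReal.ofReal_mul (inv_nonneg.2 hθ.le), hθ.ne']⟩
  unfold iidUniform
  infer_instance

theorem isProbabilityMeasure_iidExp (hr : 0 < r) : IsProbabilityMeasure (iidExp n r) := by
  have := isProbabilityMeasure_expMeasure hr
  unfold iidExp
  infer_instance

theorem orbitIntegral_iidUniformPDF [NeZero n] (hθ : 0 < θ) (hx : ∀ i, 0 < x i) :
    orbitIntegral (iidUniformPDF n θ) x = ENNReal.ofReal (1 / (n * sampleMax x ^ n)) := by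
  have hn : (0 : ℝ) < n := Nat.cast_pos.2 (NeZero.pos n)
  have hM := sampleMax_pos hx
  have hcube (u : ℝ) : Real.exp u • x ∈ univ.pi (fun _ ↦ Ioo 0 θ) ↔
      u ∈ Iio (Real.log (θ / sampleMax x)) := by
    rw [mem_Iio, Real.lt_log_iff_exp_lt (div_pos hθ hM), lt_div_iff₀ hM,
      ← sampleMax_smul (Real.exp_nonneg u), sampleMax_lt_iff]
    simp [hx, Real.exp_pos]
  calc
    _ = ∫⁻ u in Iio (Real.log (θ / sampleMax x)),
        ENNReal.ofReal (Real.exp (n * u)) * ENNReal.ofReal θ⁻¹ ^ n := by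
      rw [← lintegral_indicator measurableSet_Iio]
      refine lintegral_congr fun u ↦ ?_
      by_cases hu : u ∈ Iio (Real.log (θ / sampleMax x)) <;>
        simp [iidUniformPDF, indicator, hcube, hu]
    _ = ENNReal.ofReal (Real.exp (n * Real.log (θ / sampleMax x)) / n * θ⁻¹ ^ n) := by
      rw [lintegral_mul_const _ (by fun_prop), lintegral_Iio_exp_mul hn,
        ← ENNReal.ofReal_pow (by positivity), ← ENNReal.ofReal_mul (by positivity)]
    _ = ENNReal.ofReal (1 / (n * sampleMax x ^ n)) := by
      rw [Real.exp_nat_mul, Real.exp_log (div_pos hθ hM), div_pow, inv_pow]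
      congr 1
      field_simp

theorem orbitIntegral_iidExpPDF [NeZero n] (hr : 0 < r) (hx : ∀ i, 0 < x i) :
    orbitIntegral (iidExpPDF n r) x = ENNReal.ofReal (Real.Gamma n / (∑ i, x i) ^ n) := by
  have hn : (0 : ℝ) < n := Nat.cast_pos.2 (NeZero.pos n)
  have hS := sum_pos_of_forall_pos hx
  calc
    _ = ∫⁻ u, ENNReal.ofReal r ^ n * (ENNReal.ofReal (Real.exp (n * u)) *
        ENNReal.ofReal (Real.exp (-(r * (∑ i, x i) * Real.exp u)))) := by
      refine lintegral_congr fun u ↦ ?_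
      have : Real.exp u • x ∈ univ.pi fun _ ↦ Ioi 0 := fun i _ ↦ mul_pos (Real.exp_pos u) (hx i)
      rw [iidExpPDF, indicator_of_mem this, mul_left_comm, finrank_fin_fun]
      simp only [Pi.smul_apply, smul_eq_mul, ← Finset.mul_sum, mul_assoc,
        mul_comm (∑ i, x i)]
    _ = ENNReal.ofReal (r ^ n * ((1 / (r * ∑ i, x i)) ^ (n : ℝ) * Real.Gamma n)) := by
      rw [lintegral_const_mul _ (by fun_prop),
        lintegral_exp_mul_mul_exp_neg_mul_exp hn (mul_pos hr hS), ← ENNReal.ofReal_pow hr.le,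
        ← ENNReal.ofReal_mul (by positivity)]
    _ = ENNReal.ofReal (Real.Gamma n / (∑ i, x i) ^ n) := by
      rw [Real.rpow_natCast, div_pow, mul_pow, one_pow]
      congr 1
      field_simp

end Densities

section LikelihoodRatio

/-- The likelihood ratio, on rays, of the exponential law against the uniform law for samples of
size `n`, as a function of the value `t` of `tau`. It is `⊤` at `t ≤ 0` if `n ≠ 0`. -/
noncomputable def tauLikelihoodRatio (n : ℕ) (t : ℝ) : ℝ≥0∞ :=
  n.factorial / ENNReal.ofReal (n * t) ^ n

theorem antitone_tauLikelihoodRatio (n : ℕ) : Antitone (tauLikelihoodRatio n) := by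
  intro s t hst
  unfold tauLikelihoodRatio
  gcongr

theorem tauLikelihoodRatio_ne_top {n : ℕ} [NeZero n] {t : ℝ} (ht : 0 < t) :
    tauLikelihoodRatio n t ≠ ⊤ := by
  have hn : (0 : ℝ) < n := Nat.cast_pos.2 (NeZero.pos n)
  exact ENNReal.div_ne_top (ENNReal.natCast_ne_top _) (by positivity)

variable {n : ℕ} [NeZero n] {θ r : ℝ}

theorem orbitIntegral_div_eq_tauLikelihoodRatio (hθ : 0 < θ) (hr : 0 < r) {x : Fin n → ℝ}
    (hx : ∀ i, 0 < x i) :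
    orbitIntegral (iidExpPDF n r) x / orbitIntegral (iidUniformPDF n θ) x =
      tauLikelihoodRatio n (tau x) := by
  have hn : (0 : ℝ) < n := Nat.cast_pos.2 (NeZero.pos n)
  have hM := sampleMax_pos hx
  have hS := sum_pos_of_forall_pos hx
  have hτ := tau_pos hx
  have hfact : (n.factorial : ℝ) = n * Real.Gamma n := by
    rw [← Real.Gamma_nat_eq_factorial, Real.Gamma_add_one hn.ne']
  rw [orbitIntegral_iidExpPDF hr hx, orbitIntegral_iidUniformPDF hθ hx, tauLikelihoodRatio,
    ← ENNReal.ofReal_pow (by positivity), ← ENNReal.ofReal_natCast n.factorial,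
    ← ENNReal.ofReal_div_of_pos (by positivity), ← ENNReal.ofReal_div_of_pos (by positivity),
    hfact, tau, sampleMean, mul_div_assoc', mul_div_cancel₀ _ hn.ne', div_pow]
  congr 1
  field_simp

theorem lintegral_iidExp_eq_lintegral_iidUniform (hθ : 0 < θ) (hr : 0 < r)
    {f : (Fin n → ℝ) → ℝ≥0∞} (hf : Measurable f)
    (hf_smul : ∀ t : ℝ, 0 < t → ∀ x : Fin n → ℝ, (∀ i, 0 < x i) → f (t • x) = f x) :
    ∫⁻ x, f x ∂iidExp n r = ∫⁻ x, f x * tauLikelihoodRatio n (tau x) ∂iidUniform n θ := by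
  calc
    _ = ∫⁻ x, f x * (orbitIntegral (iidExpPDF n r) x / orbitIntegral (iidUniformPDF n θ) x)
        ∂iidUniform n θ := by
      rw [iidExp_eq_withDensity hr.le, iidUniform_eq_withDensity]
      refine lintegral_withDensity_eq_lintegral_mul_orbitIntegral_div _ hf measurable_iidExpPDF
        measurable_iidUniformPDF (fun x hx t ht ↦ hf_smul t ht x (pos_of_mem_support_iidExpPDF hx))
        (fun x hx ↦ ?_) fun x hx ↦ ?_ <;>
        rw [orbitIntegral_iidUniformPDF hθ (pos_of_mem_support_iidExpPDF hx)]
      · have hn : (0 : ℝ) < n := Nat.cast_pos.2 (NeZero.pos n)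
        have hM := sampleMax_pos (pos_of_mem_support_iidExpPDF hx)
        positivity
      · exact ENNReal.ofReal_ne_top
    _ = _ := by
      refine lintegral_congr_ae ?_
      filter_upwards [ae_iidUniform_pos] with x hx
      rw [orbitIntegral_div_eq_tauLikelihoodRatio hθ hr hx]

theorem iidUniform_tau_le_eq_zero {c : ℝ} (hc : c ≤ 0) : iidUniform n θ {x | tau x ≤ c} = 0 := by
  refine measure_eq_zero_iff_ae_notMem.2 ?_
  filter_upwards [ae_iidUniform_pos] with x hx
  exact not_le.2 (hc.trans_lt (tau_pos hx))

end LikelihoodRatio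

/-- The Neyman-Pearson lemma for the test `A`, which rejects where the likelihood ratio `w` is
large, against a randomized test `f`. -/
theorem lintegral_mul_le_setLIntegral_of_neyman_pearson {Ω : Type*} [MeasurableSpace Ω]
    {μ : Measure Ω} {f w : Ω → ℝ≥0∞} {A : Set Ω} {k : ℝ≥0∞} (hf : Measurable f)
    (hw : Measurable w) (hA : MeasurableSet A) (hkA : k * μ A ≠ ⊤) (hf_le : ∀ x, f x ≤ 1)
    (hw_ge : ∀ x ∈ A, k ≤ w x) (hw_le : ∀ x ∉ A, w x ≤ k) (hle : ∫⁻ x, f x ∂μ ≤ μ A) :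
    ∫⁻ x, f x * w x ∂μ ≤ ∫⁻ x in A, w x ∂μ := by
  have hpointwise (x : Ω) :
      f x * w x + A.indicator (fun _ ↦ k) x ≤ A.indicator w x + k * f x := by
    by_cases hx : x ∈ A
    · obtain ⟨d, hd⟩ := exists_add_of_le (hw_ge x hx)
      simp only [indicator_of_mem hx, hd]
      calc
        f x * (k + d) + k = f x * d + (k + k * f x) := by ring
        _ ≤ 1 * d + (k + k * f x) := by gcongr; exact hf_le x
        _ = k + d + k * f x := by ring
    · simp only [indicator_of_notMem hx, add_zero, zero_add, mul_comm k]
      gcongr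
      exact hw_le x hx
  refine (ENNReal.add_le_add_iff_right hkA).1 ?_
  calc
    ∫⁻ x, f x * w x ∂μ + k * μ A = ∫⁻ x, f x * w x + A.indicator (fun _ ↦ k) x ∂μ := by
      rw [lintegral_add_left (by fun_prop), lintegral_indicator_const hA]
    _ ≤ ∫⁻ x, A.indicator w x + k * f x ∂μ := lintegral_mono hpointwise
    _ = ∫⁻ x in A, w x ∂μ + k * ∫⁻ x, f x ∂μ := by
      rw [lintegral_add_left (hw.indicator hA), lintegral_indicator hA, lintegral_const_mul _ hf]
    _ ≤ ∫⁻ x in A, w x ∂μ + k * μ A := by gcongr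

theorem lintegral_iidExp_le_of_lintegral_iidUniform_le {n : ℕ} [NeZero n] {θ r c : ℝ}
    (hθ : 0 < θ) (hr : 0 < r) {f : (Fin n → ℝ) → ℝ≥0∞} (hf : Measurable f) (hf_le : ∀ x, f x ≤ 1)
    (hf_smul : ∀ t : ℝ, 0 < t → ∀ x : Fin n → ℝ, (∀ i, 0 < x i) → f (t • x) = f x)
    (hle : ∫⁻ x, f x ∂iidUniform n θ ≤ iidUniform n θ {x | tau x ≤ c}) :
    ∫⁻ x, f x ∂iidExp n r ≤ iidExp n r {x | tau x ≤ c} := by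
  have := isProbabilityMeasure_iidUniform (n := n) hθ
  have hLR := antitone_tauLikelihoodRatio n
  set A : Set (Fin n → ℝ) := {x | tau x ≤ c} with hA
  have hA_meas : MeasurableSet A := measurableSet_le measurable_tau measurable_const
  have hthreshold : tauLikelihoodRatio n c * iidUniform n θ A ≠ ⊤ := by
    obtain hc | hc := le_or_gt c 0
    · simp [hA, iidUniform_tau_le_eq_zero hc]
    · exact ENNReal.mul_ne_top (tauLikelihoodRatio_ne_top hc) (measure_ne_top _ _)
  calc
    _ = ∫⁻ x, f x * tauLikelihoodRatio n (tau x) ∂iidUniform n θ :=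
      lintegral_iidExp_eq_lintegral_iidUniform hθ hr hf hf_smul
    _ ≤ ∫⁻ x in A, tauLikelihoodRatio n (tau x) ∂iidUniform n θ :=
      lintegral_mul_le_setLIntegral_of_neyman_pearson hf (hLR.measurable.comp measurable_tau)
        hA_meas hthreshold hf_le (fun x hx ↦ hLR hx) (fun x hx ↦ hLR (not_le.1 hx).le) hle
    _ = ∫⁻ x, A.indicator 1 x ∂iidExp n r := by
      rw [lintegral_iidExp_eq_lintegral_iidUniform hθ hr (measurable_one.indicator hA_meas)
        fun t ht x _ ↦ by simp [hA, indicator, tau_smul ht], ← lintegral_indicator hA_meas]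
      simp [indicator]
    _ = iidExp n r A := lintegral_indicator_one hA_meas

theorem most_powerful_scale_free_test_general {n : ℕ} [NeZero n] {θ r c : ℝ} (hθ : 0 < θ)
    (hr : 0 < r) {φ : (Fin n → ℝ) → ℝ} (hφ : Measurable φ) (hφ_mem : ∀ x, φ x ∈ Icc (0 : ℝ) 1)
    (hφ_smul : ∀ t : ℝ, 0 < t → ∀ x : Fin n → ℝ, (∀ i, 0 < x i) → φ (t • x) = φ x)
    (hlevel : ∫ x, φ x ∂iidUniform n θ ≤ (iidUniform n θ).real {x | tau x ≤ c}) :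
    ∫ x, φ x ∂iidExp n r ≤ (iidExp n r).real {x | tau x ≤ c} := by
  have := isProbabilityMeasure_iidUniform (n := n) hθ
  have := isProbabilityMeasure_iidExp (n := n) hr
  have hint (μ : Measure (Fin n → ℝ)) [IsProbabilityMeasure μ] : Integrable φ μ :=
    .of_mem_Icc 0 1 hφ.aemeasurable (ae_of_all _ hφ_mem)
  have htoReal (μ : Measure (Fin n → ℝ)) [IsProbabilityMeasure μ] (A : Set (Fin n → ℝ)) :
      ∫ x, φ x ∂μ ≤ μ.real A ↔ ∫⁻ x, ENNReal.ofReal (φ x) ∂μ ≤ μ A := by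
    rw [← ofReal_integral_eq_lintegral_ofReal (hint μ) (ae_of_all _ fun x ↦ (hφ_mem x).1),
      ENNReal.ofReal_le_iff_le_toReal (measure_ne_top _ _), measureReal_def]
  rw [htoReal] at hlevel ⊢
  exact lintegral_iidExp_le_of_lintegral_iidUniform_le hθ hr (by fun_prop)
    (fun x ↦ ENNReal.ofReal_le_one.2 (hφ_mem x).2) (fun t ht x hx ↦ by rw [hφ_smul t ht x hx])
    hlevel

/-- The test `1{τ_n ≤ c_α}` is the most powerful scale-free test of level `α` for
uniform (null) versus exponential (alternative). -/
theorem most_powerful_scale_free_test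
    (n : ℕ) (hn : 2 ≤ n) (α : ℝ) (hα : α ∈ Set.Ioo (0 : ℝ) 1) (c : ℝ)
    (hc : iidUniform n 1 {x | tau x ≤ c} = ENNReal.ofReal α)
    (φ : (Fin n → ℝ) → ℝ) (hφmeas : Measurable φ)
    (hφval : ∀ x, φ x = 0 ∨ φ x = 1)
    (hφscale : ∀ t : ℝ, 0 < t → ∀ x : Fin n → ℝ, (∀ i, 0 < x i) → φ (t • x) = φ x)
    (hlevel : ∫ x, φ x ∂(iidUniform n 1) ≤ α) :
    ∫ x, φ x ∂(iidExp n 1) ≤ (iidExp n 1 {x | tau x ≤ c}).toReal := by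
  have : NeZero n := ⟨by omega⟩
  refine most_powerful_scale_free_test_general one_pos one_pos hφmeas (fun x ↦ ?_) hφscale ?_
  · rcases hφval x with h | h <;> simp [h]
  · rwa [measureReal_def, hc, ENNReal.toReal_ofReal hα.1.le]
end

section
/- Let n ≥ 2 and let X_1,…,X_n be i.i.d. Uniform[0,1] random variables. Then the random vector Y = (X_1/X_n, …, X_{n−1}/X_n) has probability density function on (0,∞)^{n−1} given by L_0(y_1,…,y_{n−1}) = 1 / ( n · (max{1, y_1, …, y_{n−1}})^n ). -/
open MeasureTheory ProbabilityTheory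

/-!
For a fixed divisor `t > 0`, the vector `X / t` is uniform on the dilated cube `t⁻¹ • (0, 1]^m`, so
it has density `t ^ m` at the points `y` with `t • y ∈ (0, 1]^m`. Averaging over `t` uniform on
`(0, 1]`, the density at a positive `y` is the integral of `t ^ m` over those `t ≤ 1` for which
all `t * y i ≤ 1`, that is, over `0 < t ≤ 1 / max {1, y_1, …, y_m}`.
-/

open Module
open scoped ENNReal

section Dilation

variable {E : Type*} [NormedAddCommGroup E] [NormedSpace ℝ E] [FiniteDimensional ℝ E]
  [MeasurableSpace E] [BorelSpace E] (ν : Measure E) [ν.IsAddHaarMeasure] {g : E → ℝ≥0∞}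

theorem map_inv_smul_withDensity (hg : Measurable g) {t : ℝ} (ht : t ≠ 0) :
    (ν.withDensity g).map (t⁻¹ • ·) =
      ν.withDensity fun y => ENNReal.ofReal (|t| ^ finrank ℝ E) * g (t • y) := by
  ext s hs
  have hs' : MeasurableSet ((t⁻¹ • · : E → E) ⁻¹' s) := measurable_const_smul t⁻¹ hs
  have hpre : (t • · : E → E) ⁻¹' ((t⁻¹ • ·) ⁻¹' s) = s := by
    ext y
    simp only [Set.mem_preimage, inv_smul_smul₀ ht]
  have hjac : ENNReal.ofReal (|t| ^ finrank ℝ E) * ENNReal.ofReal |(t ^ finrank ℝ E)⁻¹| = 1 := by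
    rw [← ENNReal.ofReal_mul (by positivity), abs_inv, abs_pow, mul_inv_cancel₀ (by positivity),
      ENNReal.ofReal_one]
  calc (ν.withDensity g).map (t⁻¹ • ·) s
      = ∫⁻ x in (t⁻¹ • ·) ⁻¹' s, g x ∂ν := by
        rw [Measure.map_apply (measurable_const_smul _) hs, withDensity_apply _ hs']
    _ = ENNReal.ofReal (|t| ^ finrank ℝ E) *
          ∫⁻ x in (t⁻¹ • ·) ⁻¹' s, g x ∂ν.map (t • ·) := by
        rw [Measure.map_addHaar_smul ν ht, Measure.restrict_smul, lintegral_smul_measure,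
          smul_eq_mul, ← mul_assoc, hjac, one_mul]
    _ = ENNReal.ofReal (|t| ^ finrank ℝ E) * ∫⁻ y in s, g (t • y) ∂ν := by
        rw [setLIntegral_map hs' hg (measurable_const_smul t), hpre]
    _ = ν.withDensity (fun y => ENNReal.ofReal (|t| ^ finrank ℝ E) * g (t • y)) s := by
        rw [withDensity_apply _ hs, lintegral_const_mul _ (by fun_prop)]

theorem map_inv_smul_prod_withDensity (hg : Measurable g) (μ : Measure ℝ) [SFinite μ]
    (hμ : ∀ᵐ t ∂μ, t ≠ 0) :
    (μ.prod (ν.withDensity g)).map (fun p => p.1⁻¹ • p.2) =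
      ν.withDensity fun y => ∫⁻ t, ENNReal.ofReal (|t| ^ finrank ℝ E) * g (t • y) ∂μ := by
  have hquot : Measurable fun p : ℝ × E => p.1⁻¹ • p.2 := by fun_prop
  ext s hs
  calc (μ.prod (ν.withDensity g)).map (fun p => p.1⁻¹ • p.2) s
      = ∫⁻ t, (ν.withDensity g).map (t⁻¹ • ·) s ∂μ := by
        rw [Measure.map_apply hquot hs, Measure.prod_apply (hquot hs)]
        refine lintegral_congr fun t => ?_
        rw [Measure.map_apply (measurable_const_smul _) hs]
        rfl
    _ = ∫⁻ t, ∫⁻ y in s, ENNReal.ofReal (|t| ^ finrank ℝ E) * g (t • y) ∂ν ∂μ := by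
        refine lintegral_congr_ae (hμ.mono fun t ht => ?_)
        simp only [map_inv_smul_withDensity ν hg ht, withDensity_apply _ hs]
    _ = ∫⁻ y in s, ∫⁻ t, ENNReal.ofReal (|t| ^ finrank ℝ E) * g (t • y) ∂μ ∂ν :=
        lintegral_lintegral_swap (by fun_prop)
    _ = ν.withDensity
          (fun y => ∫⁻ t, ENNReal.ofReal (|t| ^ finrank ℝ E) * g (t • y) ∂μ) s := by
        rw [withDensity_apply _ hs]

end Dilation

theorem lintegral_Ioc_ofReal_pow (m : ℕ) {a : ℝ} (ha : 0 ≤ a) :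
    ∫⁻ t in Set.Ioc 0 a, ENNReal.ofReal (t ^ m) = ENNReal.ofReal (a ^ (m + 1) / (m + 1)) := by
  rw [← ofReal_integral_eq_lintegral_ofReal, ← intervalIntegral.integral_of_le ha, integral_pow]
  · rw [zero_pow m.succ_ne_zero, sub_zero]
  · exact (continuous_pow m).integrableOn_Ioc
  · filter_upwards [ae_restrict_mem measurableSet_Ioc] with t ht using pow_nonneg ht.1.le m

theorem Ioc_inter_setOf_smul_mem_pi_Ioc {ι : Type*} [Finite ι] {y : ι → ℝ} (hy : ∀ i, 0 < y i)
    (a : ℝ) :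
    Set.Ioc 0 a ∩ {t | t • y ∈ Set.univ.pi fun _ => Set.Ioc 0 a} =
      Set.Ioc 0 (a / max 1 (⨆ i, y i)) := by
  ext t
  have hmax : 0 < max 1 (⨆ i, y i) := lt_max_of_lt_left one_pos
  simp only [Set.mem_inter_iff, Set.mem_ofPred_eq, Set.mem_univ_pi, Set.mem_Ioc, Pi.smul_apply,
    smul_eq_mul]
  constructor
  · rintro ⟨⟨h0, h1⟩, h⟩
    refine ⟨h0, (le_div_iff₀ hmax).2 ?_⟩
    rw [mul_max_of_nonneg _ _ h0.le, mul_one, Real.mul_iSup_of_nonneg h0.le]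
    exact max_le h1 (Real.iSup_le (fun i => (h i).2) (h0.le.trans h1))
  · rintro ⟨h0, hle⟩
    have hbound {c : ℝ} (hc : c ≤ max 1 (⨆ i, y i)) : t * c ≤ a :=
      (mul_le_mul_of_nonneg_left hc h0.le).trans ((le_div_iff₀ hmax).1 hle)
    refine ⟨⟨h0, mul_one t ▸ hbound (le_max_left _ _)⟩, fun i => ⟨mul_pos h0 (hy i), hbound ?_⟩⟩
    exact (le_ciSup (Set.finite_range y).bddAbove i).trans (le_max_right _ _)

/-- The density `L₀` of the ratios `X i / T`, `i : ι`, where `T` and the `X i` are independent and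
uniform on `[0, 1]`. The divisor `T` is not indexed by `ι`, so the sample size `n` is
`Fintype.card ι + 1`. -/
noncomputable def ratioDensity {ι : Type*} [Fintype ι] (y : ι → ℝ) : ℝ :=
  if ∀ i, 0 < y i then
    ((Fintype.card ι + 1) * max 1 (⨆ i, y i) ^ (Fintype.card ι + 1))⁻¹
  else 0

section

variable {ι : Type*} [Fintype ι]

theorem lintegral_Ioc_pow_mul_indicator_pi_Ioc (y : ι → ℝ) :
    ∫⁻ t in Set.Ioc (0 : ℝ) 1, ENNReal.ofReal (|t| ^ Fintype.card ι) *
        (Set.univ.pi fun _ => Set.Ioc (0 : ℝ) 1).indicator 1 (t • y) =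
      ENNReal.ofReal (ratioDensity y) := by
  set cube : Set (ι → ℝ) := Set.univ.pi fun _ => Set.Ioc 0 1
  have hcube : MeasurableSet {t : ℝ | t • y ∈ cube} :=
    (measurable_id.smul_const y) (.univ_pi fun _ => measurableSet_Ioc)
  have hindicator : ∀ t ∈ Set.Ioc (0 : ℝ) 1,
      ENNReal.ofReal (|t| ^ Fintype.card ι) * cube.indicator 1 (t • y) =
        {t | t • y ∈ cube}.indicator (fun t => ENNReal.ofReal (t ^ Fintype.card ι)) t := by
    intro t ht
    by_cases h : t • y ∈ cube <;> simp [h, abs_of_pos ht.1]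
  rw [setLIntegral_congr_fun measurableSet_Ioc hindicator, setLIntegral_indicator hcube,
    Set.inter_comm, ratioDensity]
  split_ifs with hy
  · rw [Ioc_inter_setOf_smul_mem_pi_Ioc hy, lintegral_Ioc_ofReal_pow _ (by positivity),
      one_div, inv_pow, mul_inv, div_eq_inv_mul]
  · have hempty : Set.Ioc (0 : ℝ) 1 ∩ {t | t • y ∈ cube} = ∅ := by
      refine Set.eq_empty_of_forall_notMem fun t ⟨ht, hty⟩ => hy fun i => ?_
      exact (mul_pos_iff_of_pos_left ht.1).1 (hty i trivial).1
    rw [hempty, setLIntegral_empty, ENNReal.ofReal_zero]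

theorem uniformMeasure_one : uniformMeasure 1 = volume.restrict (Set.Ioc 0 1) := by
  rw [uniformMeasure, inv_one, ENNReal.ofReal_one, one_smul, restrict_Ioc_eq_restrict_Icc]

theorem pi_uniformMeasure_one :
    (Measure.pi fun _ : ι => uniformMeasure 1) =
      volume.withDensity ((Set.univ.pi fun _ => Set.Ioc (0 : ℝ) 1).indicator 1) := by
  rw [withDensity_indicator_one (.univ_pi fun _ => measurableSet_Ioc), volume_pi,
    Measure.restrict_pi_pi, uniformMeasure_one]

theorem map_inv_smul_prod_pi_uniformMeasure_one :
    ((uniformMeasure 1).prod (Measure.pi fun _ : ι => uniformMeasure 1)).map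
        (fun p => p.1⁻¹ • p.2) =
      volume.withDensity fun y => ENNReal.ofReal (ratioDensity y) := by
  have hne : ∀ᵐ t ∂volume.restrict (Set.Ioc (0 : ℝ) 1), t ≠ 0 := by
    filter_upwards [ae_restrict_mem measurableSet_Ioc] with t ht using ht.1.ne'
  have hcube : MeasurableSet (Set.univ.pi fun _ : ι => Set.Ioc (0 : ℝ) 1) :=
    .univ_pi fun _ => measurableSet_Ioc
  rw [pi_uniformMeasure_one, uniformMeasure_one,
    map_inv_smul_prod_withDensity volume (measurable_one.indicator hcube) _ hne]
  simp only [finrank_fintype_fun_eq_card, lintegral_Ioc_pow_mul_indicator_pi_Ioc]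

end

theorem map_div_iidUniform_one {m : ℕ} (k : Fin (m + 1)) :
    (iidUniform (m + 1) 1).map (fun x (i : Fin m) => x (k.succAbove i) / x k) =
      volume.withDensity fun y => ENNReal.ofReal (ratioDensity y) := by
  have : SigmaFinite (uniformMeasure 1) := by rw [uniformMeasure_one]; infer_instance
  have hsplit := measurePreserving_piFinSuccAbove (fun _ => uniformMeasure 1) k
  rw [← map_inv_smul_prod_pi_uniformMeasure_one, ← hsplit.map_eq,
    Measure.map_map (by fun_prop) hsplit.measurable, iidUniform]
  congr 1
  ext x i
  simp [div_eq_inv_mul, Fin.removeNth_apply]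

/-- Under an i.i.d. `Uniform[0,1]` sample `X_1, …, X_n`, the vector
`(X_1/X_n, …, X_{n-1}/X_n)` has density `y ↦ 1 / (n * max {1, y_1, …, y_{n-1}} ^ n)`
on the positive orthant `(0, ∞)^{n-1}` (and `0` elsewhere). -/
theorem density_ratio_vector_uniform
    (n : ℕ) (hn : 2 ≤ n) :
    (iidUniform n 1).map
        (fun x (i : Fin (n - 1)) => x (Fin.castLE (Nat.sub_le n 1) i) / x ⟨n - 1, by omega⟩) =
      volume.withDensity fun y : Fin (n - 1) → ℝ =>
        ENNReal.ofReal
          (if ∀ i, 0 < y i then (n * (max 1 (⨆ i, y i)) ^ n)⁻¹ else 0) := by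
  obtain ⟨m, rfl⟩ : ∃ m, n = m + 1 := ⟨n - 1, by omega⟩
  simpa [ratioDensity] using! map_div_iidUniform_one (Fin.last m)
end

section
/- Let n ≥ 1 and let x_1,…,x_n > 0 be real numbers. Then Cox's maximum likelihood ratio satisfies ( sup_{λ>0} λ^n · exp(−λ·Σ_{i=1}^n x_i) ) / ( sup_{θ>0} θ^{−n} · 1{x_i ≤ θ for all i} ) = ( x_(n) / (e · x̄_n) )^n = (1/(e·τ_n))^n, where x̄_n = (1/n)·Σ_{i=1}^n x_i, x_(n) = max{x_1,…,x_n}, and τ_n = x̄_n / x_(n). -/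
/-!
The exponential likelihood depends on the sample only through its mean `m`: the likelihood is
`(l * exp (-(l * m))) ^ n`, and `u * exp (-u) ≤ exp (-1)` with `u = l * m` makes `l = 1 / m` its
maximizer. The uniform likelihood vanishes for `θ` below the sample maximum and decreases from
there on, so it is maximal at the sample maximum.
-/

open MeasureTheory

/-- The likelihood `l ↦ ∏ i, l * exp (-(l * x i))` of the sample `x` under the exponential
distribution of rate `l`, with the product expanded. -/
noncomputable def exponentialLikelihood {n : ℕ} (x : Fin n → ℝ) (l : ℝ) : ℝ :=
  l ^ n * Real.exp (-(l * ∑ i, x i))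

/-- The likelihood of the sample `x` under the uniform distribution on `[0, θ]`. The lower
constraint `0 ≤ x i` is left out, so this is a likelihood for nonnegative samples only. -/
noncomputable def uniformLikelihood {n : ℕ} (x : Fin n → ℝ) (θ : ℝ) : ℝ :=
  if ∀ i, x i ≤ θ then (θ ^ n)⁻¹ else 0

theorem isMaxOn_mul_exp_neg_mul {s : ℝ} (hs : 0 < s) :
    IsMaxOn (fun t : ℝ => t * Real.exp (-(t * s))) Set.univ s⁻¹ := by
  refine isMaxOn_iff.2 fun t _ => ?_
  calc t * Real.exp (-(t * s)) = s⁻¹ * (t * s * Real.exp (-(t * s))) := by field_simp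
    _ ≤ s⁻¹ * Real.exp (-1) := by gcongr; exact Real.mul_exp_neg_le_exp_neg_one _
    _ = s⁻¹ * Real.exp (-(s⁻¹ * s)) := by rw [inv_mul_cancel₀ hs.ne']

section

variable {n : ℕ} (x : Fin n → ℝ)

theorem le_sampleMax (i : Fin n) : x i ≤ sampleMax x :=
  le_ciSup (Set.finite_range x).bddAbove i

theorem sum_eq_mul_sampleMean : ∑ i, x i = n * sampleMean x := by
  rcases n.eq_zero_or_pos with rfl | hn
  · simp
  · rw [sampleMean, mul_div_cancel₀ _ (by positivity)]

theorem sampleMean_le_sampleMax : sampleMean x ≤ sampleMax x := by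
  rcases n.eq_zero_or_pos with rfl | hn
  · simp [sampleMean, sampleMax]
  · rw [sampleMean, div_le_iff₀' (by positivity)]
    simpa using Finset.sum_le_card_nsmul Finset.univ x (sampleMax x) fun i _ => le_sampleMax x i

theorem sampleMax_div_exp_mul_sampleMean :
    sampleMax x / (Real.exp 1 * sampleMean x) = 1 / (Real.exp 1 * tau x) := by
  rw [tau, ← mul_div_assoc, one_div_div]

theorem exponentialLikelihood_eq_pow (l : ℝ) :
    exponentialLikelihood x l = (l * Real.exp (-(l * sampleMean x))) ^ n := by
  rw [exponentialLikelihood, sum_eq_mul_sampleMean, mul_pow, ← Real.exp_nat_mul]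
  ring_nf

variable {x}

theorem sampleMean_pos (hn : 0 < n) (hx : ∀ i, 0 < x i) : 0 < sampleMean x :=
  div_pos (Finset.sum_pos (fun i _ => hx i) ⟨⟨0, hn⟩, Finset.mem_univ _⟩) (Nat.cast_pos.2 hn)

theorem isMaxOn_exponentialLikelihood (hx : 0 < sampleMean x) :
    IsMaxOn (exponentialLikelihood x) (Set.Ioi 0) (sampleMean x)⁻¹ := by
  refine isMaxOn_iff.2 fun l (hl : 0 < l) => ?_
  rw [exponentialLikelihood_eq_pow, exponentialLikelihood_eq_pow]
  exact pow_le_pow_left₀ (by positivity) (isMaxOn_mul_exp_neg_mul hx (Set.mem_univ l)) n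

theorem isMaxOn_uniformLikelihood (hx : 0 < sampleMax x) :
    IsMaxOn (uniformLikelihood x) (Set.Ioi 0) (sampleMax x) := by
  refine isMaxOn_iff.2 fun θ (hθ : 0 < θ) => ?_
  rw [uniformLikelihood, uniformLikelihood, if_pos (le_sampleMax x)]
  split_ifs with hxθ
  · have hmax : sampleMax x ≤ θ := Real.iSup_le hxθ hθ.le
    gcongr
  · positivity

theorem iSup_exponentialLikelihood (hx : 0 < sampleMean x) :
    ⨆ l : Set.Ioi (0 : ℝ), exponentialLikelihood x l = (1 / (Real.exp 1 * sampleMean x)) ^ n := by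
  refine ((isMaxOn_exponentialLikelihood hx).iSup_eq (inv_pos.2 hx)).trans ?_
  rw [exponentialLikelihood_eq_pow, inv_mul_cancel₀ hx.ne', Real.exp_neg, ← mul_inv_rev, one_div]

theorem iSup_uniformLikelihood (hx : 0 < sampleMax x) :
    ⨆ θ : Set.Ioi (0 : ℝ), uniformLikelihood x θ = (sampleMax x ^ n)⁻¹ := by
  refine ((isMaxOn_uniformLikelihood hx).iSup_eq hx).trans ?_
  rw [uniformLikelihood, if_pos (le_sampleMax x)]

theorem cox_max_likelihood_ratio_general (hx : 0 < sampleMean x) :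
    (⨆ l : Set.Ioi (0 : ℝ), exponentialLikelihood x l) /
        (⨆ θ : Set.Ioi (0 : ℝ), uniformLikelihood x θ) =
      (sampleMax x / (Real.exp 1 * sampleMean x)) ^ n ∧
    (sampleMax x / (Real.exp 1 * sampleMean x)) ^ n =
      (1 / (Real.exp 1 * tau x)) ^ n := by
  refine ⟨?_, by rw [sampleMax_div_exp_mul_sampleMean]⟩
  rw [iSup_exponentialLikelihood hx,
    iSup_uniformLikelihood (hx.trans_le (sampleMean_le_sampleMax x)), div_inv_eq_mul, ← mul_pow,
    one_div_mul_eq_div]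

end

/-- Cox's maximum likelihood ratio between the exponential and uniform models equals
`(x_(n) / (e * x̄_n))^n = (1 / (e * τ_n))^n`. -/
theorem cox_max_likelihood_ratio
    (n : ℕ) (hn : 1 ≤ n) (x : Fin n → ℝ) (hx : ∀ i, 0 < x i) :
    (⨆ l : Set.Ioi (0 : ℝ), (l : ℝ) ^ n * Real.exp (-((l : ℝ) * ∑ i, x i))) /
        (⨆ θ : Set.Ioi (0 : ℝ), if ∀ i, x i ≤ (θ : ℝ) then ((θ : ℝ) ^ n)⁻¹ else 0) =
      (sampleMax x / (Real.exp 1 * sampleMean x)) ^ n ∧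
    (sampleMax x / (Real.exp 1 * sampleMean x)) ^ n =
      (1 / (Real.exp 1 * tau x)) ^ n :=
  cox_max_likelihood_ratio_general (sampleMean_pos hn hx)
end
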